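/- arXiv:2211.06730 — 9 statements merged into one kernel-verified Lean document; each statement's English description precedes it below -/
import Mathlib

section
/- For every L > 0 and every ε > 0 there exists δ > 0 with the following property: if y and z lie in the closed ball of radius L centered at the origin of Euclidean 3-space and |dist(y, q) − dist(z, q)| ≤ δ for each of the six points q = L•e_j and q = −L•e_j (j ∈ {1,2,3}, e_j the standard basis vectors), then dist(y, z) ≤ ε. -/
/-!
By polarization, the squared distances from `y` and `z` to `q` and to `-q` determine
`⟪y - z, q⟫`. Since `a ^ 2 - b ^ 2 = (a + b) * (a - b)`, on bounded sets this inner product is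
small as soon as the differences of distances are. Letting `q` run through the multiples by `L` of
an orthonormal basis bounds every coordinate of `y - z`, with a modulus that is linear in `δ`.
-/

open Metric
open scoped RealInnerProductSpace

lemma abs_dist_sq_sub_dist_sq_le {E : Type*} [SeminormedAddCommGroup E] (y z q : E) :
    |dist y q ^ 2 - dist z q ^ 2| ≤ (‖y‖ + ‖z‖ + 2 * ‖q‖) * |dist y q - dist z q| :=
  calc
    |dist y q ^ 2 - dist z q ^ 2| = (dist y q + dist z q) * |dist y q - dist z q| := by
      rw [sq_sub_sq, abs_mul, abs_of_nonneg (by positivity)]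
    _ ≤ (‖y‖ + ‖z‖ + 2 * ‖q‖) * |dist y q - dist z q| := by
      gcongr ?_ * _
      linarith [dist_le_norm_add_norm y q, dist_le_norm_add_norm z q]

section Polarization

variable {E : Type*} [SeminormedAddCommGroup E] [InnerProductSpace ℝ E]

lemma four_mul_real_inner_sub_left_eq_dist_sq (y z q : E) :
    4 * ⟪y - z, q⟫ =
      (dist y (-q) ^ 2 - dist z (-q) ^ 2) - (dist y q ^ 2 - dist z q ^ 2) := by
  simp only [dist_eq_norm, sub_neg_eq_add, norm_add_sq_real, norm_sub_sq_real, inner_sub_left]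
  ring

lemma abs_real_inner_sub_left_le_of_abs_dist_sub_dist_le {y z q : E} {δ : ℝ}
    (hq : |dist y q - dist z q| ≤ δ) (hnegq : |dist y (-q) - dist z (-q)| ≤ δ) :
    |⟪y - z, q⟫| ≤ ((‖y‖ + ‖z‖) / 2 + ‖q‖) * δ := by
  have hsq : |dist y q ^ 2 - dist z q ^ 2| ≤ (‖y‖ + ‖z‖ + 2 * ‖q‖) * δ :=
    (abs_dist_sq_sub_dist_sq_le y z q).trans (by gcongr)
  have hsq_neg : |dist y (-q) ^ 2 - dist z (-q) ^ 2| ≤ (‖y‖ + ‖z‖ + 2 * ‖q‖) * δ := by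
    rw [← norm_neg q]
    exact (abs_dist_sq_sub_dist_sq_le y z (-q)).trans (by gcongr)
  have hfour : 4 * |⟪y - z, q⟫| ≤ 2 * ((‖y‖ + ‖z‖ + 2 * ‖q‖) * δ) :=
    calc
      4 * |⟪y - z, q⟫| = |4 * ⟪y - z, q⟫| := by rw [abs_mul, Nat.abs_ofNat]
      _ ≤ |dist y (-q) ^ 2 - dist z (-q) ^ 2| + |dist y q ^ 2 - dist z q ^ 2| := by
        rw [four_mul_real_inner_sub_left_eq_dist_sq]
        exact abs_sub _ _
      _ ≤ 2 * ((‖y‖ + ‖z‖ + 2 * ‖q‖) * δ) := by linarith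
  linarith

end Polarization

lemma norm_le_sqrt_card_mul_of_forall_norm_inner_le {ι 𝕜 E : Type*} [Fintype ι] [RCLike 𝕜]
    [NormedAddCommGroup E] [InnerProductSpace 𝕜 E] (b : OrthonormalBasis ι 𝕜 E) {x : E} {C : ℝ}
    (h : ∀ i, ‖inner 𝕜 (b i) x‖ ≤ C) : ‖x‖ ≤ √(Fintype.card ι) * C := by
  refine (b.norm_le_card_mul_iSup_norm_inner x).trans ?_
  cases isEmpty_or_nonempty ι
  · simp
  · gcongr
    exact ciSup_le h

section OrthonormalBasis

variable {ι E : Type*} [Fintype ι] [NormedAddCommGroup E] [InnerProductSpace ℝ E]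
  (b : OrthonormalBasis ι ℝ E)

lemma dist_le_sqrt_card_mul_of_abs_dist_smul_sub_dist_smul_le {L r δ : ℝ} (hL : 0 < L) {y z : E}
    (hy : y ∈ closedBall 0 r) (hz : z ∈ closedBall 0 r)
    (h : ∀ i, |dist y (L • b i) - dist z (L • b i)| ≤ δ ∧
      |dist y (-(L • b i)) - dist z (-(L • b i))| ≤ δ) :
    dist y z ≤ √(Fintype.card ι) * ((r + L) / L) * δ := by
  have hcoord (i : ι) : ‖⟪b i, y - z⟫‖ ≤ (r + L) / L * δ := by
    have hδ : 0 ≤ δ := (abs_nonneg _).trans (h i).1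
    have hLinner : L * ‖⟪b i, y - z⟫‖ ≤ (r + L) * δ :=
      calc
        L * ‖⟪b i, y - z⟫‖ = |⟪y - z, L • b i⟫| := by
          rw [real_inner_smul_right, abs_mul, abs_of_pos hL, real_inner_comm, Real.norm_eq_abs]
        _ ≤ ((‖y‖ + ‖z‖) / 2 + ‖L • b i‖) * δ :=
          abs_real_inner_sub_left_le_of_abs_dist_sub_dist_le (h i).1 (h i).2
        _ ≤ (r + L) * δ := by
          rw [norm_smul, b.norm_eq_one, mul_one, Real.norm_of_nonneg hL.le]
          gcongr
          linarith [mem_closedBall_zero_iff.mp hy, mem_closedBall_zero_iff.mp hz]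
    rwa [div_mul_eq_mul_div, le_div_iff₀' hL]
  rw [dist_eq_norm, mul_assoc]
  exact norm_le_sqrt_card_mul_of_forall_norm_inner_le b hcoord

theorem modulus_of_continuity_distances_to_axis_points_general
    {L : ℝ} (hL : 0 < L) (r : ℝ) {ε : ℝ} (hε : 0 < ε) :
    ∃ δ : ℝ, 0 < δ ∧ ∀ y z : E, y ∈ closedBall 0 r → z ∈ closedBall 0 r →
      (∀ i, |dist y (L • b i) - dist z (L • b i)| ≤ δ ∧
        |dist y (-(L • b i)) - dist z (-(L • b i))| ≤ δ) →
      dist y z ≤ ε := by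
  obtain ⟨δ, hδ, hlt⟩ := exists_pos_mul_lt hε (√(Fintype.card ι) * ((r + L) / L))
  exact ⟨δ, hδ, fun y z hy hz h =>
    (dist_le_sqrt_card_mul_of_abs_dist_smul_sub_dist_smul_le b hL hy hz h).trans hlt.le⟩

end OrthonormalBasis

theorem modulus_of_continuity_distances_to_axis_points
    (L : ℝ) (hL : 0 < L) (ε : ℝ) (hε : 0 < ε) :
    ∃ δ : ℝ, 0 < δ ∧
      ∀ y z : EuclideanSpace ℝ (Fin 3),
        y ∈ Metric.closedBall (0 : EuclideanSpace ℝ (Fin 3)) L →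
        z ∈ Metric.closedBall (0 : EuclideanSpace ℝ (Fin 3)) L →
        (∀ j : Fin 3,
          |dist y (L • EuclideanSpace.single j (1 : ℝ)) -
            dist z (L • EuclideanSpace.single j (1 : ℝ))| ≤ δ ∧
          |dist y (-(L • EuclideanSpace.single j (1 : ℝ))) -
            dist z (-(L • EuclideanSpace.single j (1 : ℝ)))| ≤ δ) →
        dist y z ≤ ε := by
  simpa only [EuclideanSpace.basisFun_apply] using
    modulus_of_continuity_distances_to_axis_points_general
      (EuclideanSpace.basisFun (Fin 3) ℝ) hL L hε
end

section
/- Let (X_i)_{i∈ℕ} be nonempty compact metric spaces and X a nonempty compact metric space such that the Gromov–Hausdorff distance from X_i to X tends to 0 as i → ∞. For each i let Ω_i be a nonempty compact subset of X_i, equipped with the metric restricted from X_i. Then there exist a strictly increasing function φ : ℕ → ℕ and a nonempty compact subset Ω of X (with the restricted metric) such that the Gromov–Hausdorff distance from Ω_{φ(i)} to Ω tends to 0 as i → ∞. -/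
/-!
Embed `X` and `Y` isometrically in a common space so that the Hausdorff distance `r` between their
images realizes their Gromov–Hausdorff distance. A compact `K ⊆ X` then has Hausdorff distance at
most `r` from the set of points of `Y` within `r` of `K`. Replacing each `Ω i` by such a shadow in
`Y` reduces the problem to a sequence in the hyperspace of nonempty compact subsets of `Y`, which is
compact for the Hausdorff distance.
-/

section Hausdorff

open Metric Set

theorem hausdorffEDist_cthickening_inter_le {α : Type*} [PseudoEMetricSpace α] {s t : Set α}
    {r : ℝ} (ht : IsCompact t) (hst : s ⊆ cthickening r t) :
    hausdorffEDist s (cthickening r s ∩ t) ≤ ENNReal.ofReal r := by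
  refine hausdorffEDist_le_of_infEDist (fun x hx ↦ ?_) fun y hy ↦ hy.1
  have ht_nonempty : t.Nonempty := by
    refine nonempty_iff_ne_empty.2 fun ht_empty ↦ ?_
    simpa [ht_empty] using hst hx
  obtain ⟨y, hyt, hxy⟩ := ht.exists_infEDist_eq_edist ht_nonempty x
  have hxy_le : edist x y ≤ ENNReal.ofReal r := hxy ▸ hst hx
  have hy : y ∈ cthickening r s ∩ t :=
    ⟨mem_cthickening_of_edist_le y x r s hx (edist_comm x y ▸ hxy_le), hyt⟩
  exact (infEDist_le_edist_of_mem hy).trans hxy_le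

theorem subset_cthickening_hausdorffDist {α : Type*} [PseudoMetricSpace α] {s t : Set α}
    (h : hausdorffEDist s t ≠ ⊤) : s ⊆ cthickening (hausdorffDist s t) t := fun x hx ↦ by
  rw [mem_cthickening_iff, hausdorffDist, ENNReal.ofReal_toReal h]
  exact infEDist_le_hausdorffEDist_of_mem hx

end Hausdorff

section GromovHausdorff

open Filter GromovHausdorff Metric Set TopologicalSpace
open scoped Topology

universe u v w

theorem ghDist_nonemptyCompacts_le_hausdorffDist_image {X : Type u} {Y : Type v} {E : Type w}
    [MetricSpace X] [MetricSpace Y] [MetricSpace E] {Φ : X → E} {Ψ : Y → E}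
    (hΦ : Isometry Φ) (hΨ : Isometry Ψ) (K : NonemptyCompacts X) (L : NonemptyCompacts Y) :
    ghDist K L ≤ hausdorffDist (Φ '' K) (Ψ '' L) := by
  have hΦK : Isometry fun x : K ↦ Φ x := hΦ.comp isometry_subtype_coe
  have hΨL : Isometry fun y : L ↦ Ψ y := hΨ.comp isometry_subtype_coe
  rw [image_eq_range, image_eq_range]
  exact ghDist_le_hausdorffDist hΦK hΨL

theorem exists_nonemptyCompacts_ghDist_le_ghDist {X : Type u} (Y : Type v)
    [MetricSpace X] [CompactSpace X] [Nonempty X] [MetricSpace Y] [CompactSpace Y] [Nonempty Y]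
    (K : NonemptyCompacts X) : ∃ L : NonemptyCompacts Y, ghDist K L ≤ ghDist X Y := by
  obtain ⟨Φ, Ψ, hΦ, hΨ, hXY⟩ := ghDist_eq_hausdorffDist X Y
  have hXY_top : hausdorffEDist (range Φ) (range Ψ) ≠ ⊤ :=
    hausdorffEDist_ne_top_of_nonempty_of_bounded (range_nonempty Φ) (range_nonempty Ψ)
      (isCompact_range hΦ.continuous).isBounded (isCompact_range hΨ.continuous).isBounded
  let S : Set Y := Ψ ⁻¹' cthickening (ghDist X Y) (Φ '' K)
  have hKS : hausdorffEDist (Φ '' K) (Ψ '' S) ≤ ENNReal.ofReal (ghDist X Y) := by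
    rw [image_preimage_eq_inter_range]
    refine hausdorffEDist_cthickening_inter_le (isCompact_range hΨ.continuous) ?_
    exact (image_subset_range Φ K).trans (hXY ▸ subset_cthickening_hausdorffDist hXY_top)
  have hS_compact : IsCompact S := (isClosed_cthickening.preimage hΨ.continuous).isCompact
  have hS_nonempty : S.Nonempty := image_nonempty.1 <|
    nonempty_of_hausdorffEDist_ne_top (K.nonempty.image Φ)
      (ne_top_of_le_ne_top ENNReal.ofReal_ne_top hKS)
  refine ⟨⟨⟨S, hS_compact⟩, hS_nonempty⟩, ?_⟩
  exact (ghDist_nonemptyCompacts_le_hausdorffDist_image hΦ hΨ K _).trans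
    (ENNReal.toReal_le_of_le_ofReal dist_nonneg hKS)

theorem compact_subsets_subconverge_under_GH_convergence_general {X : ℕ → Type u} {Y : Type v}
    [∀ i, MetricSpace (X i)] [∀ i, CompactSpace (X i)] [∀ i, Nonempty (X i)]
    [MetricSpace Y] [CompactSpace Y] [Nonempty Y]
    (hXY : Tendsto (fun i ↦ ghDist (X i) Y) atTop (𝓝 0)) (K : ∀ i, NonemptyCompacts (X i)) :
    ∃ φ : ℕ → ℕ, StrictMono φ ∧
      ∃ Z : NonemptyCompacts Y, Tendsto (fun i ↦ ghDist (K (φ i)) Z) atTop (𝓝 0) := by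
  choose L hKL using fun i ↦ exists_nonemptyCompacts_ghDist_le_ghDist Y (K i)
  obtain ⟨Z, φ, hφ, hLZ⟩ := CompactSpace.tendsto_subseq L
  have hbound (i : ℕ) : ghDist (K (φ i)) Z ≤ ghDist (X (φ i)) Y + dist (L (φ i)) Z :=
    calc ghDist (K (φ i)) Z
      _ ≤ ghDist (K (φ i)) (L (φ i)) + ghDist (L (φ i)) Z := dist_triangle _ _ _
      _ ≤ ghDist (X (φ i)) Y + dist (L (φ i)) Z :=
        add_le_add (hKL (φ i)) (ghDist_le_nonemptyCompacts_dist _ _)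
  have hlim : Tendsto (fun i ↦ ghDist (X (φ i)) Y + dist (L (φ i)) Z) atTop (𝓝 0) := by
    simpa only [add_zero, Function.comp_apply] using
      (hXY.comp hφ.tendsto_atTop).add (tendsto_iff_dist_tendsto_zero.1 hLZ)
  exact ⟨φ, hφ, Z, squeeze_zero (fun _ ↦ dist_nonneg) hbound hlim⟩

end GromovHausdorff

open GromovHausdorff in
theorem compact_subsets_subconverge_under_GH_convergence
    (X : ℕ → Type) [∀ i, MetricSpace (X i)] [∀ i, CompactSpace (X i)] [∀ i, Nonempty (X i)]
    (Y : Type) [MetricSpace Y] [CompactSpace Y] [Nonempty Y]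
    (hconv : Filter.Tendsto (fun i => ghDist (X i) Y) Filter.atTop (nhds 0))
    (Ω : ∀ i, Set (X i)) (hne : ∀ i, (Ω i).Nonempty) (hcpt : ∀ i, IsCompact (Ω i)) :
    ∃ φ : ℕ → ℕ, StrictMono φ ∧
      ∃ (Z : Set Y) (hZne : Z.Nonempty) (hZc : IsCompact Z),
        Filter.Tendsto
          (fun i =>
            @ghDist (Ω (φ i)) Z _ (Set.Nonempty.to_subtype (hne (φ i)))
              (isCompact_iff_compactSpace.mp (hcpt (φ i))) _
              (Set.Nonempty.to_subtype hZne)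
              (isCompact_iff_compactSpace.mp hZc))
          Filter.atTop (nhds 0) := by
  obtain ⟨φ, hφ, Z, hZ⟩ := compact_subsets_subconverge_under_GH_convergence_general hconv
    fun i ↦ ⟨⟨Ω i, hcpt i⟩, hne i⟩
  exact ⟨φ, hφ, Z, Z.nonempty, Z.isCompact, hZ⟩
end

section
/- Let X and Y be topological spaces and let f : X → Y be a local homeomorphism which is also a closed map. Then the set { y ∈ Y : there exists a unique x ∈ X with f(x) = y } is an open subset of Y. -/
/-! A closed map confines the fibers near `y` to any given neighborhood of the fiber over `y`. If
that fiber has at most one point, the neighborhood can be chosen so that `f` is injective on it, and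
then the nearby fibers have at most one point as well; openness of the range keeps them nonempty. -/

open Set Topology

section

variable {X Y : Type*} {f : X → Y}

theorem setOf_existsUnique_eq_range_inter (f : X → Y) :
    {y | ∃! x, f x = y} = range f ∩ {y | (f ⁻¹' {y}).Subsingleton} := by
  ext y
  exact ⟨fun h ↦ ⟨h.exists, fun _ ha _ hb ↦ h.unique ha hb⟩,
    fun ⟨hy, hsub⟩ ↦ existsUnique_of_exists_of_unique hy fun _ _ ha hb ↦ hsub ha hb⟩

variable [TopologicalSpace X]

theorem exists_isOpen_superset_injOn_of_subsingleton {s : Set X}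
    (hinj : IsLocallyInjective f) (hs : s.Subsingleton) :
    ∃ U, IsOpen U ∧ s ⊆ U ∧ InjOn f U := by
  rcases hs.eq_empty_or_singleton with rfl | ⟨x, rfl⟩
  · exact ⟨∅, isOpen_empty, Subset.rfl, injOn_empty f⟩
  · simpa only [singleton_subset_iff] using hinj x

variable [TopologicalSpace Y]

theorem isOpen_setOf_subsingleton_fiber (hinj : IsLocallyInjective f) (hclosed : IsClosedMap f) :
    IsOpen {y | (f ⁻¹' {y}).Subsingleton} := by
  refine isOpen_iff_mem_nhds.2 fun y hy ↦ ?_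
  obtain ⟨U, hUopen, hyU, hUinj⟩ := exists_isOpen_superset_injOn_of_subsingleton hinj hy
  have hfiber : kernImage f U ∈ 𝓝 y :=
    (isClosedMap_iff_kernImage.1 hclosed hUopen).mem_nhds hyU
  filter_upwards [hfiber] with z hz
  exact fun a ha b hb ↦ hUinj (hz ha) (hz hb) (ha.trans hb.symm)

end

theorem unique_preimage_set_isOpen_of_localHomeomorph_closedMap_general
    {X Y : Type*} [TopologicalSpace X] [TopologicalSpace Y] {f : X → Y}
    (hinj : IsLocallyInjective f) (hrange : IsOpen (range f)) (hclosed : IsClosedMap f) :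
    IsOpen {y : Y | ∃! x : X, f x = y} := by
  rw [setOf_existsUnique_eq_range_inter]
  exact hrange.inter (isOpen_setOf_subsingleton_fiber hinj hclosed)

theorem unique_preimage_set_isOpen_of_localHomeomorph_closedMap
    {X Y : Type*} [TopologicalSpace X] [TopologicalSpace Y] (f : X → Y)
    (hloc : IsLocalHomeomorph f) (hclosed : IsClosedMap f) :
    IsOpen {y : Y | ∃! x : X, f x = y} :=
  unique_preimage_set_isOpen_of_localHomeomorph_closedMap_general hloc.isLocallyInjective
    hloc.isOpenMap.isOpen_range hclosed
end

section
/- Let r > 0 and M ≥ 0. Let f : ℝ³ → ℝ³ (Euclidean 3-space to itself) be differentiable on the open set {x : ‖x‖ > r/2}, and assume that ‖Df(x) − Id‖ ≤ 1/2 in operator norm for every x with ‖x‖ ≥ r, and that ‖f(x)‖ ≤ M for every x with ‖x‖ = r. Then for every w ∈ ℝ³ with ‖w‖ ≥ 20(M + r + 1), the set {x : ‖x‖ ≥ r and f(x) = w} contains at most one point. -/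
/-!
The displacement `f - id` is `c`-Lipschitz along segments that avoid the ball of radius `r`, with
`c < 1`, so two solutions of `f x = w` joined by such a segment coincide. If the segment from `x`
to `y` meets the ball, then `‖x - y‖` is `‖x‖ + ‖y‖` up to an error `2 * r`. But `f x = f y` forces
`‖x - y‖` to be at most the sum of the two displacements, which by radial integration from the
sphere is at most `c * (‖x‖ + ‖y‖)` up to a constant; hence `x` and `y`, and with them `w`, are
bounded.
-/

open Metric

section Segments

variable {E F : Type*} [NormedAddCommGroup E] [NormedSpace ℝ E] [NormedAddCommGroup F]
  [NormedSpace ℝ F]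

theorem norm_image_sub_sub_le_of_segment_subset {f : E → F} {f' : E → E →L[ℝ] F} {φ : E →L[ℝ] F}
    {s : Set E} {c : ℝ} {x y : E} (hf : ∀ z ∈ s, HasFDerivWithinAt f (f' z) s z)
    (hf' : ∀ z ∈ s, ‖f' z - φ‖ ≤ c) (hseg : segment ℝ x y ⊆ s) :
    ‖f y - f x - φ (y - x)‖ ≤ c * ‖y - x‖ :=
  (convex_segment x y).norm_image_sub_le_of_norm_hasFDerivWithin_le'
    (fun z hz ↦ (hf z (hseg hz)).mono hseg) (fun z hz ↦ hf' z (hseg hz))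
    (left_mem_segment ℝ x y) (right_mem_segment ℝ x y)

theorem norm_add_norm_le_of_mem_segment {x y z : E} (hz : z ∈ segment ℝ x y) :
    ‖x‖ + ‖y‖ ≤ ‖x - y‖ + 2 * ‖z‖ := by
  calc ‖x‖ + ‖y‖ ≤ (‖x - z‖ + ‖z‖) + (‖z - y‖ + ‖z‖) := by
        gcongr
        · exact norm_le_norm_sub_add x z
        · rw [norm_sub_rev]
          exact norm_le_norm_sub_add y z
    _ = ‖x - y‖ + 2 * ‖z‖ := by
        have hdist := dist_add_dist_of_mem_segment hz
        simp only [dist_eq_norm] at hdist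
        linarith

theorem segment_subset_setOf_le_norm {p x : E} {r : ℝ} (h : ‖x - p‖ ≤ ‖x‖ - r) :
    segment ℝ p x ⊆ {z | r ≤ ‖z‖} := by
  have hp : p ∈ closedBall x (‖x‖ - r) := by rwa [mem_closedBall, dist_comm, dist_eq_norm]
  have hx : x ∈ closedBall x (‖x‖ - r) := mem_closedBall_self ((norm_nonneg _).trans h)
  intro z hz
  have hzx : ‖z - x‖ ≤ ‖x‖ - r :=
    mem_closedBall_iff_norm.1 ((convex_closedBall x _).segment_subset hp hx hz)
  have := norm_le_norm_sub_add x z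
  rw [norm_sub_rev] at this
  exact (by linarith : r ≤ ‖z‖)

theorem exists_norm_eq_norm_sub_eq {x : E} {r : ℝ} (hr : 0 ≤ r) (hx : r ≤ ‖x‖) :
    ∃ p : E, ‖p‖ = r ∧ ‖x - p‖ = ‖x‖ - r := by
  have ht : r / ‖x‖ * ‖x‖ = r := div_mul_cancel_of_imp fun h ↦ le_antisymm (h ▸ hx) hr
  have ht0 : 0 ≤ r / ‖x‖ := by positivity
  have ht1 : r / ‖x‖ ≤ 1 := div_le_one_of_le₀ hx (norm_nonneg x)
  refine ⟨(r / ‖x‖) • x, by rw [norm_smul_of_nonneg ht0, ht], ?_⟩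
  calc ‖x - (r / ‖x‖) • x‖ = ‖(1 - r / ‖x‖) • x‖ := by rw [sub_smul, one_smul]
    _ = ‖x‖ - r := by rw [norm_smul_of_nonneg (sub_nonneg.2 ht1), sub_mul, one_mul, ht]

end Segments

section NearIdentity

variable {E : Type*} [NormedAddCommGroup E] [NormedSpace ℝ E] {f : E → E} {f' : E → E →L[ℝ] E}
  {r M c : ℝ} {x y : E}

theorem eq_of_segment_subset_of_norm_sub_id_le {s : Set E}
    (hf : ∀ z ∈ s, HasFDerivWithinAt f (f' z) s z)
    (hf' : ∀ z ∈ s, ‖f' z - ContinuousLinearMap.id ℝ E‖ ≤ c) (hc : c < 1)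
    (hseg : segment ℝ x y ⊆ s) (hxy : f x = f y) : x = y := by
  have hmvt : ‖y - x‖ ≤ c * ‖y - x‖ := by
    simpa [hxy, norm_sub_rev] using norm_image_sub_sub_le_of_segment_subset hf hf' hseg
  have hzero : ‖y - x‖ ≤ 0 := by nlinarith
  exact (sub_eq_zero.1 (norm_le_zero_iff.1 hzero)).symm

theorem norm_image_sub_self_le_of_le_norm
    (hf : ∀ z ∈ {z | r ≤ ‖z‖}, HasFDerivWithinAt f (f' z) {z | r ≤ ‖z‖} z)
    (hf' : ∀ z ∈ {z | r ≤ ‖z‖}, ‖f' z - ContinuousLinearMap.id ℝ E‖ ≤ c)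
    (hM : ∀ z, ‖z‖ = r → ‖f z‖ ≤ M) (hr : 0 ≤ r) (hx : r ≤ ‖x‖) :
    ‖f x - x‖ ≤ M + r + c * (‖x‖ - r) := by
  obtain ⟨p, hp, hxp⟩ := exists_norm_eq_norm_sub_eq hr hx
  have hmvt : ‖f x - f p - (x - p)‖ ≤ c * (‖x‖ - r) :=
    hxp ▸ norm_image_sub_sub_le_of_segment_subset hf hf' (segment_subset_setOf_le_norm hxp.le)
  calc ‖f x - x‖ = ‖f p - p + (f x - f p - (x - p))‖ := by congr 1; abel
    _ ≤ ‖f p‖ + ‖p‖ + ‖f x - f p - (x - p)‖ := norm_add_le_of_le (norm_sub_le _ _) le_rfl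
    _ ≤ M + r + c * (‖x‖ - r) := by gcongr; exacts [hM p hp, hp.le]

theorem norm_image_lt_of_not_segment_subset
    (hf : ∀ z ∈ {z | r ≤ ‖z‖}, HasFDerivWithinAt f (f' z) {z | r ≤ ‖z‖} z)
    (hf' : ∀ z ∈ {z | r ≤ ‖z‖}, ‖f' z - ContinuousLinearMap.id ℝ E‖ ≤ c)
    (hM : ∀ z, ‖z‖ = r → ‖f z‖ ≤ M) (hc : c < 1) (hx : r ≤ ‖x‖) (hy : r ≤ ‖y‖)
    (hseg : ¬segment ℝ x y ⊆ {z | r ≤ ‖z‖}) (hxy : f x = f y) :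
    (1 - c) * ‖f x‖ < 2 * M + (3 - c) * r := by
  obtain ⟨z, hz, hzr⟩ := Set.not_subset.1 hseg
  replace hzr : ‖z‖ < r := not_le.1 hzr
  have hr : 0 ≤ r := (norm_nonneg z).trans hzr.le
  have hc0 : 0 ≤ c := (norm_nonneg _).trans (hf' x hx)
  have hdx : ‖f x - x‖ ≤ M + r + c * (‖x‖ - r) := norm_image_sub_self_le_of_le_norm hf hf' hM hr hx
  have hdy : ‖f y - y‖ ≤ M + r + c * (‖y‖ - r) := norm_image_sub_self_le_of_le_norm hf hf' hM hr hy
  have hdetour : ‖x‖ + ‖y‖ ≤ ‖x - y‖ + 2 * ‖z‖ := norm_add_norm_le_of_mem_segment hz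
  have hnear : ‖x - y‖ ≤ ‖f y - y‖ + ‖f x - x‖ := by
    calc ‖x - y‖ = ‖f y - y - (f x - x)‖ := by rw [hxy]; congr 1; abel
      _ ≤ ‖f y - y‖ + ‖f x - x‖ := norm_sub_le _ _
  have hsum : (1 - c) * (‖x‖ + ‖y‖) < 2 * M + (4 - 2 * c) * r := by linarith
  have hwx : ‖f x‖ ≤ ‖f x - x‖ + ‖x‖ := norm_le_norm_sub_add _ _
  have hwy : ‖f x‖ ≤ ‖f y - y‖ + ‖y‖ := hxy ▸ norm_le_norm_sub_add _ _
  have himage : 2 * ‖f x‖ ≤ (1 + c) * (‖x‖ + ‖y‖) + 2 * (M + (1 - c) * r) := by linarith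
  have hscaled : 2 * ((1 - c) * ‖f x‖) < 2 * (2 * M + (3 - c) * r) := by
    calc 2 * ((1 - c) * ‖f x‖) = (1 - c) * (2 * ‖f x‖) := by ring
      _ ≤ (1 - c) * ((1 + c) * (‖x‖ + ‖y‖) + 2 * (M + (1 - c) * r)) := by gcongr
      _ = (1 + c) * ((1 - c) * (‖x‖ + ‖y‖)) + 2 * (1 - c) * (M + (1 - c) * r) := by ring
      _ < (1 + c) * (2 * M + (4 - 2 * c) * r) + 2 * (1 - c) * (M + (1 - c) * r) := by gcongr
      _ = 2 * (2 * M + (3 - c) * r) := by ring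
  linarith

theorem one_to_one_near_infinity_general
    (hf : ∀ z ∈ {z | r ≤ ‖z‖}, HasFDerivWithinAt f (f' z) {z | r ≤ ‖z‖} z)
    (hf' : ∀ z ∈ {z | r ≤ ‖z‖}, ‖f' z - ContinuousLinearMap.id ℝ E‖ ≤ c)
    (hM : ∀ z, ‖z‖ = r → ‖f z‖ ≤ M) (hc : c < 1) {w : E}
    (hw : 2 * M + (3 - c) * r ≤ (1 - c) * ‖w‖) :
    {x : E | r ≤ ‖x‖ ∧ f x = w}.Subsingleton := by
  rintro x ⟨hx, rfl⟩ y ⟨hy, hyx⟩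
  by_cases hseg : segment ℝ x y ⊆ {z | r ≤ ‖z‖}
  · exact eq_of_segment_subset_of_norm_sub_id_le hf hf' hc hseg hyx.symm
  · exact absurd hw
      (norm_image_lt_of_not_segment_subset hf hf' hM hc hx hy hseg hyx.symm).not_ge

end NearIdentity

theorem one_to_one_near_infinity
    (r M : ℝ) (hr : 0 < r) (hM : 0 ≤ M)
    (f : EuclideanSpace ℝ (Fin 3) → EuclideanSpace ℝ (Fin 3))
    (hdiff : DifferentiableOn ℝ f {x : EuclideanSpace ℝ (Fin 3) | r / 2 < ‖x‖})
    (hder : ∀ x : EuclideanSpace ℝ (Fin 3), r ≤ ‖x‖ →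
      ‖fderiv ℝ f x - ContinuousLinearMap.id ℝ (EuclideanSpace ℝ (Fin 3))‖ ≤ 1 / 2)
    (hbd : ∀ x : EuclideanSpace ℝ (Fin 3), ‖x‖ = r → ‖f x‖ ≤ M) :
    ∀ w : EuclideanSpace ℝ (Fin 3), 20 * (M + r + 1) ≤ ‖w‖ →
      {x : EuclideanSpace ℝ (Fin 3) | r ≤ ‖x‖ ∧ f x = w}.Subsingleton := by
  have hf (x : EuclideanSpace ℝ (Fin 3)) (hx : r ≤ ‖x‖) :
      HasFDerivWithinAt f (fderiv ℝ f x) {x | r ≤ ‖x‖} x :=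
    (hdiff.hasFDerivAt ((isOpen_lt continuous_const continuous_norm).mem_nhds
      ((half_lt_self hr).trans_le hx))).hasFDerivWithinAt
  exact fun w hw ↦ one_to_one_near_infinity_general hf hder hbd (by norm_num) (by linarith)
end

section
/- Let r > 0 and M ≥ 0. Let f : ℝ³ → ℝ³ (Euclidean 3-space to itself) be differentiable on the open set {x : ‖x‖ > r/2}, and assume that ‖Df(x) − Id‖ ≤ 1/2 in operator norm for every x with ‖x‖ ≥ r, and that ‖f(x)‖ ≤ M for every x with ‖x‖ = r. Then for every x with ‖x‖ ≥ r one has (1/2)(‖x‖ − r) − M ≤ ‖f(x)‖ ≤ M + (3/2)(‖x‖ − r). -/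
/-! The closed ball of radius `‖x‖ - r` about `x` is convex, stays outside the open ball of radius
`r` about the origin, and touches its boundary sphere at a point `y`, for instance the radial
projection of `x`. The mean value inequality on the closed ball compares `f x - f y` with the linear
increment `φ (x - y)`, whose size is controlled because `‖x - y‖ = ‖x‖ - r`. -/

open Metric

section Seminormed

variable {E F : Type*} [SeminormedAddCommGroup E] [SeminormedAddCommGroup F]

theorem le_norm_of_mem_closedBall_norm_sub {x z : E} {r : ℝ}
    (hz : z ∈ closedBall x (‖x‖ - r)) : r ≤ ‖z‖ := by
  have htriangle : ‖x‖ - ‖z‖ ≤ ‖x - z‖ := norm_sub_norm_le x z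
  linarith [mem_closedBall_iff_norm'.1 hz]

variable [NormedSpace ℝ E] [NormedSpace ℝ F]

theorem exists_norm_eq_and_norm_sub_eq {x : E} {r : ℝ} (hr : 0 ≤ r) (hx : r ≤ ‖x‖) :
    ∃ y : E, ‖y‖ = r ∧ ‖x - y‖ = ‖x‖ - r := by
  have hdist : dist x 0 ≤ r + (‖x‖ - r) := by simp
  obtain ⟨y, hxy, hy⟩ := exists_dist_le_le (sub_nonneg.2 hx) hr hdist
  rw [dist_eq_norm] at hxy
  rw [dist_zero_right] at hy
  have htriangle : ‖x‖ - ‖y‖ ≤ ‖x - y‖ := norm_sub_norm_le x y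
  exact ⟨y, by linarith, by linarith⟩

variable {φ : E →L[ℝ] F} {u v : F} {w : E} {C : ℝ}

theorem norm_le_of_norm_sub_sub_apply_le (h : ‖u - v - φ w‖ ≤ C * ‖w‖) :
    ‖u‖ ≤ ‖v‖ + (‖φ‖ + C) * ‖w‖ :=
  calc
    ‖u‖ = ‖v + φ w + (u - v - φ w)‖ := by congr 1; abel
    _ ≤ ‖v‖ + ‖φ w‖ + ‖u - v - φ w‖ := norm_add₃_le
    _ ≤ ‖v‖ + ‖φ‖ * ‖w‖ + C * ‖w‖ := by gcongr; exact φ.le_opNorm w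
    _ = ‖v‖ + (‖φ‖ + C) * ‖w‖ := by ring

theorem le_norm_of_norm_sub_sub_apply_le {a : ℝ} (hφ : a * ‖w‖ ≤ ‖φ w‖)
    (h : ‖u - v - φ w‖ ≤ C * ‖w‖) : (a - C) * ‖w‖ - ‖v‖ ≤ ‖u‖ := by
  have hlinear : a * ‖w‖ ≤ ‖u‖ + ‖v‖ + C * ‖w‖ :=
    calc
      a * ‖w‖ ≤ ‖φ w‖ := hφ
      _ ≤ ‖u - v‖ + ‖u - v - φ w‖ := norm_le_norm_add_norm_sub _ _
      _ ≤ ‖u‖ + ‖v‖ + C * ‖w‖ := by gcongr; exact norm_sub_le u v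
  linarith

end Seminormed

variable {E F : Type*} [NormedAddCommGroup E] [NormedSpace ℝ E]
  [NormedAddCommGroup F] [NormedSpace ℝ F]

theorem norm_image_sub_le_of_norm_fderiv_sub_le_outside_ball {f : E → F} {φ : E →L[ℝ] F}
    {x y : E} {r C : ℝ} (hdiff : ∀ z, r ≤ ‖z‖ → DifferentiableAt ℝ f z)
    (hder : ∀ z, r ≤ ‖z‖ → ‖fderiv ℝ f z - φ‖ ≤ C) (hxy : ‖x - y‖ ≤ ‖x‖ - r) :
    ‖f x - f y - φ (x - y)‖ ≤ C * ‖x - y‖ :=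
  (convex_closedBall x (‖x‖ - r)).norm_image_sub_le_of_norm_fderiv_le'
    (fun z hz ↦ hdiff z (le_norm_of_mem_closedBall_norm_sub hz))
    (fun z hz ↦ hder z (le_norm_of_mem_closedBall_norm_sub hz))
    (mem_closedBall_iff_norm'.2 hxy)
    (mem_closedBall_self ((norm_nonneg _).trans hxy))

theorem norm_growth_near_infinity_general {f : E → F} {φ : E →L[ℝ] F} {r M C a : ℝ} (hr : 0 ≤ r)
    (hφ : ∀ v, a * ‖v‖ ≤ ‖φ v‖)
    (hdiff : ∀ x, r ≤ ‖x‖ → DifferentiableAt ℝ f x)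
    (hder : ∀ x, r ≤ ‖x‖ → ‖fderiv ℝ f x - φ‖ ≤ C)
    (hbd : ∀ x, ‖x‖ = r → ‖f x‖ ≤ M) {x : E} (hx : r ≤ ‖x‖) :
    (a - C) * (‖x‖ - r) - M ≤ ‖f x‖ ∧ ‖f x‖ ≤ M + (‖φ‖ + C) * (‖x‖ - r) := by
  obtain ⟨y, hy, hxy⟩ := exists_norm_eq_and_norm_sub_eq hr hx
  have happrox : ‖f x - f y - φ (x - y)‖ ≤ C * ‖x - y‖ :=
    norm_image_sub_le_of_norm_fderiv_sub_le_outside_ball hdiff hder hxy.le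
  have hlower := le_norm_of_norm_sub_sub_apply_le (hφ (x - y)) happrox
  have hupper := norm_le_of_norm_sub_sub_apply_le happrox
  rw [hxy] at hlower hupper
  have hfy : ‖f y‖ ≤ M := hbd y hy
  constructor <;> linarith

theorem norm_growth_near_infinity
    (r M : ℝ) (hr : 0 < r) (hM : 0 ≤ M)
    (f : EuclideanSpace ℝ (Fin 3) → EuclideanSpace ℝ (Fin 3))
    (hdiff : DifferentiableOn ℝ f {x : EuclideanSpace ℝ (Fin 3) | r / 2 < ‖x‖})
    (hder : ∀ x : EuclideanSpace ℝ (Fin 3), r ≤ ‖x‖ →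
      ‖fderiv ℝ f x - ContinuousLinearMap.id ℝ (EuclideanSpace ℝ (Fin 3))‖ ≤ 1 / 2)
    (hbd : ∀ x : EuclideanSpace ℝ (Fin 3), ‖x‖ = r → ‖f x‖ ≤ M) :
    ∀ x : EuclideanSpace ℝ (Fin 3), r ≤ ‖x‖ →
      (1 / 2) * (‖x‖ - r) - M ≤ ‖f x‖ ∧ ‖f x‖ ≤ M + (3 / 2) * (‖x‖ - r) := by
  intro x hx
  have hdiffAt : ∀ z, r ≤ ‖z‖ → DifferentiableAt ℝ f z := fun z hz ↦
    hdiff.differentiableAt ((isOpen_lt continuous_const continuous_norm).mem_nhds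
      ((half_lt_self hr).trans_le hz))
  have hgrowth := norm_growth_near_infinity_general (a := 1) hr.le (by simp) hdiffAt hder hbd hx
  rw [ContinuousLinearMap.norm_id] at hgrowth
  convert hgrowth using 3 <;> norm_num
end

section
/- Let C ≥ 1 be a real number and let a : ℕ → ℝ be a sequence with a_k ≥ 0 for all k, a_0 ≤ 1, and a_k ≤ C^(k/3^k) · a_{k−1}^(1 − 1/(2·3^{k−1})) for every k ≥ 1 (real exponentiation). Then a_k ≤ C · a_0^(5/24) for every k. -/
/- Iterating the recursion bounds `a k` by `C ^ S * a 0 ^ P`, where `S` is a partial sum of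
`∑ j / 3 ^ j = 3 / 4` and `P` a partial product of `∏ (1 - 1 / (2 * 3 ^ j))`. By Weierstrass'
product inequality `P ≥ 1 - ∑ 1 / (2 * 3 ^ j) = 1 / 4`, which already exceeds `5 / 24`, so the
initial factors of the product need not be split off. -/

open Finset

theorem le_prod_mul_rpow_prod_of_le_mul_rpow {a b e : ℕ → ℝ} (ha : ∀ k, 0 ≤ a k)
    (hb : ∀ k, 1 ≤ b k) (he : ∀ k, e k ∈ Set.Icc 0 1)
    (hrec : ∀ k, a (k + 1) ≤ b k * a k ^ e k) (k : ℕ) :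
    a k ≤ (∏ j ∈ range k, b j) * a 0 ^ ∏ j ∈ range k, e j := by
  induction k with
  | zero => simp
  | succ k ih =>
    have hb_nonneg : 0 ≤ b k := zero_le_one.trans (hb k)
    have hB : 1 ≤ ∏ j ∈ range k, b j := one_le_prod fun j _ ↦ hb j
    set B := ∏ j ∈ range k, b j
    set q := ∏ j ∈ range k, e j
    have ha_rpow : 0 ≤ a 0 ^ q := Real.rpow_nonneg (ha 0) q
    calc a (k + 1) ≤ b k * a k ^ e k := hrec k
      _ ≤ b k * (B * a 0 ^ q) ^ e k := by
        gcongr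
        exacts [ha k, (he k).1]
      _ = b k * (B ^ e k * a 0 ^ (q * e k)) := by
        rw [Real.mul_rpow (zero_le_one.trans hB) ha_rpow, Real.rpow_mul (ha 0)]
      _ ≤ b k * (B * a 0 ^ (q * e k)) := by
        gcongr
        · exact Real.rpow_nonneg (ha 0) _
        · exact Real.rpow_le_self_of_one_le hB (he k).2
      _ = (∏ j ∈ range (k + 1), b j) * a 0 ^ ∏ j ∈ range (k + 1), e j := by
        rw [prod_range_succ, prod_range_succ]
        ring

theorem le_rpow_mul_rpow_of_sum_le_of_le_prod {C : ℝ} (hC : 1 ≤ C) {a s e : ℕ → ℝ}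
    (ha : ∀ k, 0 ≤ a k) (ha0 : a 0 ≤ 1) (hs : ∀ k, 0 ≤ s k) (he : ∀ k, e k ∈ Set.Icc 0 1)
    (hrec : ∀ k, a (k + 1) ≤ C ^ s k * a k ^ e k) {S P : ℝ} (hP : 0 ≤ P) {k : ℕ}
    (hsum : ∑ j ∈ range k, s j ≤ S) (hprod : P ≤ ∏ j ∈ range k, e j) :
    a k ≤ C ^ S * a 0 ^ P := by
  calc a k ≤ (∏ j ∈ range k, C ^ s j) * a 0 ^ ∏ j ∈ range k, e j :=
        le_prod_mul_rpow_prod_of_le_mul_rpow ha (fun j ↦ Real.one_le_rpow hC (hs j)) he hrec k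
    _ = C ^ (∑ j ∈ range k, s j) * a 0 ^ ∏ j ∈ range k, e j := by
        rw [Real.rpow_sum_of_pos (zero_lt_one.trans_le hC)]
    _ ≤ C ^ S * a 0 ^ P :=
        mul_le_mul (Real.rpow_le_rpow_of_exponent_le hC hsum)
          (Real.rpow_le_rpow_of_exponent_ge' (ha 0) ha0 hP hprod)
          (Real.rpow_nonneg (ha 0) _) (Real.rpow_nonneg (zero_le_one.trans hC) _)

theorem one_sub_sum_le_prod_one_sub {ι R : Type*} [CommRing R] [PartialOrder R]
    [IsOrderedRing R] {s : Finset ι} {f : ι → R} (hf : ∀ i ∈ s, f i ∈ Set.Icc 0 1) :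
    1 - ∑ i ∈ s, f i ≤ ∏ i ∈ s, (1 - f i) := by
  induction s using Finset.cons_induction with
  | empty => simp
  | cons i s hi ih =>
    rw [forall_mem_cons] at hf
    obtain ⟨hfi, hfs⟩ := hf
    rw [sum_cons, prod_cons]
    calc 1 - (f i + ∑ j ∈ s, f j)
        ≤ 1 - (f i + ∑ j ∈ s, f j) + f i * ∑ j ∈ s, f j :=
          le_add_of_nonneg_right (mul_nonneg hfi.1 (sum_nonneg fun j hj ↦ (hfs j hj).1))
      _ = (1 - f i) * (1 - ∑ j ∈ s, f j) := by ring
      _ ≤ (1 - f i) * ∏ j ∈ s, (1 - f j) :=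
          mul_le_mul_of_nonneg_left (ih hfs) (sub_nonneg.2 hfi.2)

theorem one_sub_div_le_prod_one_sub_mul_pow {c r : ℝ} (hc : c ∈ Set.Icc 0 1) (hr : 0 ≤ r)
    (hr_lt : r < 1) (n : ℕ) : 1 - c / (1 - r) ≤ ∏ j ∈ range n, (1 - c * r ^ j) := by
  have hterm (j : ℕ) : c * r ^ j ∈ Set.Icc 0 1 :=
    unitInterval.mul_mem hc (unitInterval.submonoid.pow_mem ⟨hr, hr_lt.le⟩ j)
  have hsum : ∑ j ∈ range n, c * r ^ j ≤ c / (1 - r) :=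
    sum_le_hasSum _ (fun j _ ↦ (hterm j).1) ((hasSum_geometric_of_lt_one hr hr_lt).mul_left c)
  exact (sub_le_sub_left hsum 1).trans (one_sub_sum_le_prod_one_sub fun j _ ↦ hterm j)

theorem sum_range_succ_mul_pow_succ_le {r : ℝ} (hr : 0 ≤ r) (hr_lt : r < 1) (n : ℕ) :
    ∑ j ∈ range n, ((j + 1 : ℕ) : ℝ) * r ^ (j + 1) ≤ r / (1 - r) ^ 2 := by
  have hsum := hasSum_coe_mul_geometric_of_norm_lt_one
    (show ‖r‖ < 1 by rwa [Real.norm_of_nonneg hr])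
  have hpartial := sum_le_hasSum (range (n + 1)) (fun j _ ↦ by positivity) hsum
  simpa only [sum_range_succ', Nat.cast_zero, zero_mul, add_zero] using hpartial

theorem moser_iteration_arithmetic
    (C : ℝ) (hC : 1 ≤ C) (a : ℕ → ℝ)
    (ha : ∀ k, 0 ≤ a k) (ha0 : a 0 ≤ 1)
    (hrec : ∀ k : ℕ, 1 ≤ k →
      a k ≤ C ^ ((k : ℝ) / 3 ^ k) * a (k - 1) ^ (1 - 1 / (2 * 3 ^ (k - 1)) : ℝ)) :
    ∀ k, a k ≤ C * a 0 ^ ((5 : ℝ) / 24) := by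
  intro k
  let s : ℕ → ℝ := fun j ↦ ((j + 1 : ℕ) : ℝ) * (1 / 3) ^ (j + 1)
  let e : ℕ → ℝ := fun j ↦ 1 - 1 / 2 * (1 / 3) ^ j
  have hs (j : ℕ) : 0 ≤ s j := by positivity
  have he (j : ℕ) : e j ∈ Set.Icc 0 1 :=
    Set.Icc.one_sub_mem <| unitInterval.mul_mem (by norm_num)
      (unitInterval.submonoid.pow_mem ⟨by norm_num, by norm_num⟩ j)
  have hstep (j : ℕ) : a (j + 1) ≤ C ^ s j * a j ^ e j := by
    convert hrec (j + 1) (Nat.le_add_left 1 j) using 3 <;> simp [s, e, div_eq_mul_inv, mul_comm]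
  have hsum : ∑ j ∈ range k, s j ≤ 3 / 4 :=
    (sum_range_succ_mul_pow_succ_le (by norm_num) (by norm_num) k).trans_eq (by norm_num)
  have hprod : 1 / 4 ≤ ∏ j ∈ range k, e j :=
    le_of_eq_of_le (by norm_num)
      (one_sub_div_le_prod_one_sub_mul_pow (by norm_num) (by norm_num) (by norm_num) k)
  simpa only [Real.rpow_one] using
    le_rpow_mul_rpow_of_sum_le_of_le_prod (S := 1) (P := 5 / 24) hC ha ha0 hs he hstep
      (by norm_num) (hsum.trans (by norm_num)) (le_trans (by norm_num) hprod)
end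

section
/- Let X be a metric space, let 0 < L₀ ≤ L be real numbers, and let f : X → ℝ³ be a map into Euclidean 3-space with ‖f(x)‖ ≤ L for every x ∈ X. Let Q ⊆ X be a subset such that: (i) every w ∈ ℝ³ with L₀ ≤ ‖w‖ ≤ L is of the form f(p) for some p ∈ Q; and (ii) dist(x, p) = ‖f(x) − f(p)‖ for every x ∈ X and every p ∈ Q. Then f is 1-Lipschitz: ‖f(x) − f(y)‖ ≤ dist(x, y) for all x, y ∈ X. -/
/-!
Suppose `f` reproduces the distances to `p`, and that `f y` lies between `f x` and `f p`. Then
`dist (f x) (f y) = dist (f x) (f p) - dist (f y) (f p) = dist x p - dist y p ≤ dist x y`.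
Such a `p` exists because the ray from `f x` through `f y` has to leave the bounded region
containing the image of `f`, and does so beyond `f y`, at a point of the frontier.
-/

open AffineMap Bornology Filter Metric Set

theorem dist_le_dist_of_wbtw {X V P : Type*} [PseudoMetricSpace X] [SeminormedAddCommGroup V]
    [NormedSpace ℝ V] [PseudoMetricSpace P] [NormedAddTorsor V P] {f : X → P} {x y p : X}
    (hxyp : Wbtw ℝ (f x) (f y) (f p)) (hx : dist (f x) (f p) ≤ dist x p)
    (hy : dist y p ≤ dist (f y) (f p)) : dist (f x) (f y) ≤ dist x y := by
  linarith [hxyp.dist_add_dist, dist_triangle x y p]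

theorem inter_frontier_nonempty_of_isPreconnected {α : Type*} [TopologicalSpace α] {s K : Set α}
    (hs : IsPreconnected s) (hsK : (s ∩ K).Nonempty) (hsdiff : (s \ K).Nonempty) :
    (s ∩ frontier K).Nonempty := by
  by_contra! hempty
  have hcover : s ⊆ interior K ∪ interior Kᶜ := by
    rwa [← compl_frontier_eq_union_interior, subset_compl_iff_disjoint_right,
      disjoint_iff_inter_eq_empty]
  have hdisj : Disjoint (interior K) (interior Kᶜ) :=
    disjoint_compl_right.mono interior_subset interior_subset
  rcases hs.subset_or_subset isOpen_interior isOpen_interior hdisj hcover with hin | hout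
  · obtain ⟨x, hxs, hxK⟩ := hsdiff
    exact hxK (interior_subset (hin hxs))
  · obtain ⟨x, hxs, hxK⟩ := hsK
    exact interior_subset (hout hxs) hxK

section Ray

variable {V P : Type*} [SeminormedAddCommGroup V] [NormedSpace ℝ V] [PseudoMetricSpace P]
  [NormedAddTorsor V P] {a b : P}

theorem tendsto_dist_lineMap_left_atTop (hab : dist a b ≠ 0) :
    Tendsto (fun t : ℝ ↦ dist (lineMap a b t) a) atTop atTop := by
  simp only [dist_lineMap_left]
  exact tendsto_norm_atTop_atTop.atTop_mul_const (dist_nonneg.lt_of_ne' hab)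

theorem exists_one_le_lineMap_notMem {K : Set P} (hK : IsBounded K) (hab : dist a b ≠ 0) :
    ∃ t : ℝ, 1 ≤ t ∧ lineMap a b t ∉ K := by
  obtain ⟨r, hKr⟩ := hK.subset_closedBall a
  have hfar := (tendsto_dist_lineMap_left_atTop hab).eventually_gt_atTop r
  obtain ⟨t, hrt, ht⟩ := (hfar.and (eventually_ge_atTop 1)).exists
  exact ⟨t, ht, fun htK ↦ hrt.not_ge (hKr htK)⟩

theorem exists_mem_frontier_wbtw {K : Set P} (hK : IsBounded K) (hb : b ∈ K)
    (hab : dist a b ≠ 0) : ∃ z ∈ frontier K, Wbtw ℝ a b z := by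
  let ray : Set P := lineMap a b '' Ici (1 : ℝ)
  have hray : IsPreconnected ray := isPreconnected_Ici.image _ lineMap_continuous.continuousOn
  have hmeets : (ray ∩ K).Nonempty := ⟨b, ⟨1, self_mem_Ici, lineMap_apply_one a b⟩, hb⟩
  have hleaves : (ray \ K).Nonempty := by
    obtain ⟨t, ht, htK⟩ := exists_one_le_lineMap_notMem hK hab
    exact ⟨lineMap a b t, mem_image_of_mem _ ht, htK⟩
  obtain ⟨z, hz, hzK⟩ := inter_frontier_nonempty_of_isPreconnected hray hmeets hleaves
  exact ⟨z, hzK, wbtw_iff_left_eq_or_right_mem_image_Ici.mpr (Or.inr hz)⟩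

end Ray

theorem one_lipschitz_of_exact_distances_to_annulus_general
    {X V P : Type*} [PseudoMetricSpace X] [SeminormedAddCommGroup V] [NormedSpace ℝ V]
    [PseudoMetricSpace P] [NormedAddTorsor V P] {f : X → P} {K : Set P} {Q : Set X}
    (hK : IsBounded K) (hfK : ∀ x, f x ∈ K) (hsurj : frontier K ⊆ f '' Q)
    (hdist : ∀ x, ∀ p ∈ Q, dist x p = dist (f x) (f p)) : LipschitzWith 1 f := by
  refine LipschitzWith.mk_one fun x y ↦ ?_
  by_cases hxy : dist (f x) (f y) = 0
  · exact hxy.trans_le dist_nonneg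
  obtain ⟨z, hz, hxyz⟩ := exists_mem_frontier_wbtw hK (hfK y) hxy
  obtain ⟨p, hpQ, rfl⟩ := hsurj hz
  exact dist_le_dist_of_wbtw hxyz (hdist x p hpQ).ge (hdist y p hpQ).le

theorem one_lipschitz_of_exact_distances_to_annulus
    {X : Type*} [MetricSpace X] (L₀ L : ℝ) (hL₀ : 0 < L₀) (hL : L₀ ≤ L)
    (f : X → EuclideanSpace ℝ (Fin 3)) (hfbd : ∀ x, ‖f x‖ ≤ L)
    (Q : Set X)
    (hsurj : ∀ w : EuclideanSpace ℝ (Fin 3), L₀ ≤ ‖w‖ → ‖w‖ ≤ L → ∃ p ∈ Q, f p = w)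
    (hdist : ∀ x : X, ∀ p ∈ Q, dist x p = ‖f x - f p‖) :
    ∀ x y : X, ‖f x - f y‖ ≤ dist x y := by
  have hfrontier : frontier (closedBall 0 L) ⊆ f '' Q := fun w hw ↦ by
    have hwL : ‖w‖ = L := mem_sphere_zero_iff_norm.mp (frontier_closedBall_subset_sphere hw)
    exact hsurj w (hL.trans hwL.ge) hwL.le
  have hlip : LipschitzWith 1 f :=
    one_lipschitz_of_exact_distances_to_annulus_general isBounded_closedBall
      (fun x ↦ mem_closedBall_zero_iff.mpr (hfbd x)) hfrontier
      (by simpa only [dist_eq_norm] using hdist)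
  simpa [dist_eq_norm (f _)] using hlip.dist_le_mul
end

section
/- For all real numbers D > 0 and δ > 0 there exists a constant C > 0 such that: for every subset Σ of ℝ³ (Euclidean 3-space) and every point x ∈ ℝ³ whose distance to Σ is at least δ (infDist(x, Σ) ≥ δ), the Lebesgue (outer) measure of the set { z ∈ closedBall(x, D) : the segment [x, z] meets Σ } is at most C times the 2-dimensional Hausdorff measure of Σ ∩ closedBall(x, D). -/
open MeasureTheory

/-!
If `δ ≤ dist x y`, `y ∈ [x, z]` and `z` lies within `D` of `x`, then `z` is the image of `y` under
a homothety with centre `x` and ratio at most `D / δ`. Hence the points hidden from `x` by `S` lie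
in the image of `[0, D / δ] × (S ∩ closedBall x D)` under `(t, y) ↦ x + t (y - x)`, which is
Lipschitz there. For an interval `I` of length `ℓ`, `μH[d + 1] (I × A) ≤ ℓ * μH[d] A`: in a
cover of `A`, a set `U` of diameter `r` is replaced by about `ℓ / r` sets `J × U`
of diameter `r`. Finally, in dimension `n + 1` every Haar measure is a multiple of `μH[n + 1]`.
-/

open Filter Metric Set Topology
open scoped ENNReal NNReal

section IntervalProduct

theorem Icc_subset_biUnion_Icc_add_mul {K : Type*} [Field K] [LinearOrder K]
    [IsStrictOrderedRing K] [FloorSemiring K] (a b : K) {r : K} (hr : 0 < r) :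
    Icc a b ⊆ ⋃ k ∈ Finset.range (⌊(b - a) / r⌋₊ + 1), Icc (a + k * r) (a + (k + 1) * r) := by
  rintro t ⟨hat, htb⟩
  have hfloor_le : (⌊(t - a) / r⌋₊ : K) * r ≤ t - a :=
    (le_div_iff₀ hr).1 (Nat.floor_le (div_nonneg (sub_nonneg.2 hat) hr.le))
  have hlt_floor : t - a < (⌊(t - a) / r⌋₊ + 1) * r :=
    (div_lt_iff₀ hr).1 (Nat.lt_floor_add_one _)
  have hindex : ⌊(t - a) / r⌋₊ ≤ ⌊(b - a) / r⌋₊ := Nat.floor_le_floor (by gcongr)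
  refine mem_biUnion (Finset.mem_coe.2 (Finset.mem_range_succ_iff.2 hindex)) ⟨?_, ?_⟩ <;> linarith

theorem ediam_prod_le {X Y : Type*} [PseudoEMetricSpace X] [PseudoEMetricSpace Y]
    (s : Set X) (t : Set Y) : ediam (s ×ˢ t) ≤ max (ediam s) (ediam t) :=
  ediam_le fun _ hp _ hq =>
    max_le_max (edist_le_ediam_of_mem hp.1 hq.1) (edist_le_ediam_of_mem hp.2 hq.2)

variable {X : Type*} [EMetricSpace X]

/-- The approximation of the `d`-dimensional Hausdorff measure at scale `ε`: the infimum of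
`∑ (diam Uᵢ) ^ d` over countable covers by sets `Uᵢ` of diameter at most `ε`. It is built from
Mathlib's `mkMetric'.pre`, so that its supremum over `ε > 0` is `μH[d]`. -/
noncomputable def hausdorffContent (d : ℝ) (ε : ℝ≥0∞) : OuterMeasure X :=
  OuterMeasure.mkMetric'.pre (fun s => ediam s ^ d) ε

theorem tendsto_hausdorffContent [MeasurableSpace X] [BorelSpace X] (d : ℝ) (s : Set X) :
    Tendsto (fun ε => hausdorffContent d ε s) (𝓝[>] 0) (𝓝 (μH[d] s)) := by
  rw [Measure.hausdorffMeasure, ← OuterMeasure.coe_mkMetric]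
  exact OuterMeasure.mkMetric'.tendsto_pre _ s

theorem hausdorffContent_le_rpow {d : ℝ} (hd : 0 ≤ d) {ε r : ℝ≥0∞} (hr : r ≤ ε) {s : Set X}
    (hs : ediam s ≤ r) : hausdorffContent d ε s ≤ r ^ d :=
  (OuterMeasure.mkMetric'.pre_le (hs.trans hr)).trans (ENNReal.rpow_le_rpow hs hd)

theorem hausdorffContent_Icc_prod_le_of_ediam_le {d : ℝ} (hd : 0 ≤ d) {a b r : ℝ} (hab : a ≤ b)
    (hr : 0 < r) {ε : ℝ≥0∞} (hrε : .ofReal r ≤ ε) {B : Set X} (hB : ediam B ≤ .ofReal r) :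
    hausdorffContent (d + 1) ε (Icc a b ×ˢ B) ≤ .ofReal (b - a + r) * .ofReal r ^ d := by
  set N := ⌊(b - a) / r⌋₊ + 1
  let piece (k : ℕ) : Set (ℝ × X) := Icc (a + k * r) (a + (k + 1) * r) ×ˢ B
  have hcover : Icc a b ×ˢ B ⊆ ⋃ k ∈ Finset.range N, piece k := by
    simp only [piece, ← iUnion_prod_const]
    exact prod_mono_left (Icc_subset_biUnion_Icc_add_mul a b hr)
  have hpiece (k : ℕ) : ediam (piece k) ≤ .ofReal r := by
    refine (ediam_prod_le _ _).trans (max_le ?_ hB)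
    rw [Real.ediam_Icc]
    exact (congrArg ENNReal.ofReal (by ring)).le
  have hcount : N * r ≤ b - a + r := by
    have := Nat.floor_le (div_nonneg (sub_nonneg.2 hab) hr.le)
    rw [le_div_iff₀ hr] at this
    push_cast [N]
    linarith
  calc hausdorffContent (d + 1) ε (Icc a b ×ˢ B)
      ≤ ∑ k ∈ Finset.range N, hausdorffContent (d + 1) ε (piece k) :=
        (measure_mono hcover).trans (measure_biUnion_finset_le _ _)
    _ ≤ ∑ k ∈ Finset.range N, .ofReal r ^ (d + 1) :=
        Finset.sum_le_sum fun k _ => hausdorffContent_le_rpow (by positivity) hrε (hpiece k)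
    _ = .ofReal (N * r) * .ofReal r ^ d := by
        rw [Finset.sum_const, Finset.card_range, nsmul_eq_mul,
          ENNReal.rpow_add_of_nonneg _ _ hd zero_le_one, ENNReal.rpow_one,
          ENNReal.ofReal_mul (Nat.cast_nonneg _), ENNReal.ofReal_natCast]
        ring
    _ ≤ .ofReal (b - a + r) * .ofReal r ^ d := by gcongr

theorem hausdorffContent_Icc_prod_le_ediam_rpow {d : ℝ} (hd : 0 ≤ d) {a b ε : ℝ} (hab : a ≤ b)
    {B : Set X} (hB : ediam B < .ofReal ε) :
    hausdorffContent (d + 1) (.ofReal ε) (Icc a b ×ˢ B) ≤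
      .ofReal (b - a + ε) * ediam B ^ d := by
  have hfin : ediam B ≠ ⊤ := hB.ne_top
  set ρ := (ediam B).toReal
  have hρ : ediam B = .ofReal ρ := (ENNReal.ofReal_toReal hfin).symm
  have hρε : ρ < ε := (ENNReal.lt_ofReal_iff_toReal_lt hfin).1 hB
  have hbound : ∀ r ∈ Ioo ρ ε, hausdorffContent (d + 1) (.ofReal ε) (Icc a b ×ˢ B) ≤
      .ofReal (b - a + ε) * .ofReal r ^ d := fun r ⟨hρr, hrε⟩ =>
    calc hausdorffContent (d + 1) (.ofReal ε) (Icc a b ×ˢ B)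
        ≤ .ofReal (b - a + r) * .ofReal r ^ d :=
          hausdorffContent_Icc_prod_le_of_ediam_le hd hab (ENNReal.toReal_nonneg.trans_lt hρr)
            (ENNReal.ofReal_le_ofReal hrε.le) (hρ.trans_le (ENNReal.ofReal_le_ofReal hρr.le))
      _ ≤ .ofReal (b - a + ε) * .ofReal r ^ d := by gcongr
  -- `diam B` may be zero, whereas subdividing `[a, b]` needs a positive step: hence the limit.
  have hlim : Tendsto (fun r => ENNReal.ofReal (b - a + ε) * .ofReal r ^ d)
      (𝓝[>] ρ) (𝓝 (.ofReal (b - a + ε) * .ofReal ρ ^ d)) :=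
    ENNReal.Tendsto.const_mul (ENNReal.continuous_rpow_const.comp
      ENNReal.continuous_ofReal).continuousWithinAt (.inr ENNReal.ofReal_ne_top)
  rw [hρ]
  exact ge_of_tendsto hlim (mem_of_superset (Ioo_mem_nhdsGT hρε) hbound)

variable [MeasurableSpace X] [BorelSpace X]

theorem hausdorffContent_Icc_prod_le {d : ℝ} (hd : 0 ≤ d) {a b ε : ℝ} (hab : a ≤ b)
    (hε : 0 < ε) (A : Set X) :
    hausdorffContent (d + 1) (.ofReal ε) (Icc a b ×ˢ A) ≤ .ofReal (b - a + ε) * μH[d] A := by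
  let ν : OuterMeasure X := OuterMeasure.map Prod.snd
    (OuterMeasure.restrict (Prod.fst ⁻¹' Icc a b) (hausdorffContent (d + 1) (.ofReal ε)))
  have hν (B : Set X) : ν B = hausdorffContent (d + 1) (.ofReal ε) (Icc a b ×ˢ B) := by
    rw [OuterMeasure.map_apply, OuterMeasure.restrict_apply, inter_comm, Set.prod_eq]
  have hc : ENNReal.ofReal (b - a + ε) ≠ 0 := (ENNReal.ofReal_pos.2 (by linarith)).ne'
  have hν_le : ν ≤ OuterMeasure.mkMetric (ENNReal.ofReal (b - a + ε) • (· ^ d)) := by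
    refine OuterMeasure.le_mkMetric _ ν (.ofReal (ε / 2)) (by positivity) fun B hB => ?_
    rw [hν]
    exact hausdorffContent_Icc_prod_le_ediam_rpow hd hab
      (hB.trans_lt ((ENNReal.ofReal_lt_ofReal_iff hε).2 (half_lt_self hε)))
  rw [OuterMeasure.mkMetric_smul _ ENNReal.ofReal_ne_top hc] at hν_le
  rw [← hν, Measure.hausdorffMeasure, ← OuterMeasure.coe_mkMetric]
  exact hν_le A

theorem hausdorffMeasure_Icc_prod_le {d : ℝ} (hd : 0 ≤ d) {a b : ℝ} (hab : a < b) (A : Set X) :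
    μH[d + 1] (Icc a b ×ˢ A) ≤ .ofReal (b - a) * μH[d] A := by
  have hscale : Tendsto ENNReal.ofReal (𝓝[>] 0) (𝓝[>] 0) :=
    tendsto_nhdsWithin_iff.2 ⟨(ENNReal.continuous_ofReal.tendsto' 0 0 (by simp)).mono_left
      nhdsWithin_le_nhds, eventually_mem_nhdsWithin.mono fun _ => ENNReal.ofReal_pos.2⟩
  have hconst : Tendsto (fun ε => ENNReal.ofReal (b - a + ε)) (𝓝[>] 0) (𝓝 (.ofReal (b - a))) :=
    ((ENNReal.continuous_ofReal.comp (continuous_const_add (b - a))).tendsto' 0 _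
      (by simp)).mono_left nhdsWithin_le_nhds
  exact le_of_tendsto_of_tendsto ((tendsto_hausdorffContent _ _).comp hscale)
    (ENNReal.Tendsto.mul_const hconst
      (Or.inl (ENNReal.ofReal_pos.2 (sub_pos.2 hab)).ne'))
    (eventually_mem_nhdsWithin.mono fun _ hε => hausdorffContent_Icc_prod_le hd hab.le hε A)

end IntervalProduct

section Cone

variable {E : Type*} [NormedAddCommGroup E] [NormedSpace ℝ E]

/-- The cone over `A` with vertex `x`, truncated at ratio `R`: the union of the images of `A`
under the homotheties with centre `x` and ratio in `[0, R]`. It contains the points that `A`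
hides from `x`. -/
def coneOver (x : E) (R : ℝ) (A : Set E) : Set E :=
  (fun p : ℝ × E => AffineMap.lineMap x p.2 p.1) '' (Icc 0 R ×ˢ A)

theorem setOf_segment_inter_nonempty_subset_coneOver {D δ : ℝ} (hδ : 0 < δ) {S : Set E} {x : E}
    (hx : δ ≤ infDist x S) :
    {z | z ∈ closedBall x D ∧ (segment ℝ x z ∩ S).Nonempty} ⊆
      coneOver x (D / δ) (S ∩ closedBall x D) := by
  rintro z ⟨hz, y, hy, hyS⟩
  rw [segment_eq_image_lineMap] at hy
  obtain ⟨s, ⟨hs0, hs1⟩, rfl⟩ := hy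
  set y := AffineMap.lineMap x z s
  have hdist : dist y x = s * dist z x := by
    rw [dist_lineMap_left, Real.norm_of_nonneg hs0, dist_comm]
  have hδy : δ ≤ s * dist z x := by
    rw [← hdist, dist_comm]
    exact hx.trans (infDist_le_dist_of_mem hyS)
  have hs : 0 < s := pos_of_mul_pos_left (hδ.trans_le hδy) dist_nonneg
  have hratio : s⁻¹ ≤ D / δ := by
    rw [le_div_iff₀ hδ, inv_mul_le_iff₀ hs]
    exact hδy.trans (by gcongr; exact hz)
  have hyD : dist y x ≤ D := hdist.trans_le ((mul_le_of_le_one_left dist_nonneg hs1).trans hz)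
  refine ⟨(s⁻¹, y), ⟨⟨by positivity, hratio⟩, hyS, hyD⟩, ?_⟩
  simp [y, AffineMap.lineMap_apply, smul_smul, hs.ne']

theorem lipschitzOnWith_lineMap_Icc_prod_closedBall (x : E) (R D : ℝ) :
    LipschitzOnWith (R + D).toNNReal (fun p : ℝ × E => AffineMap.lineMap x p.2 p.1)
      (Icc 0 R ×ˢ closedBall x D) := by
  refine LipschitzOnWith.of_dist_le' fun p hp q hq => ?_
  obtain ⟨t, y⟩ := p
  obtain ⟨s, z⟩ := q
  have hy : dist x y ≤ D := mem_closedBall'.1 hp.2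
  have hs : dist (AffineMap.lineMap x y s) (AffineMap.lineMap x z s) = s * dist y z := by
    rw [AffineMap.lineMap_apply_module', AffineMap.lineMap_apply_module', dist_add_right,
      dist_smul₀, dist_sub_right, Real.norm_of_nonneg hq.1.1]
  calc dist (AffineMap.lineMap x y t) (AffineMap.lineMap x z s)
      ≤ dist (AffineMap.lineMap x y t) (AffineMap.lineMap x y s) +
          dist (AffineMap.lineMap x y s) (AffineMap.lineMap x z s) := dist_triangle _ _ _
    _ = dist t s * dist x y + s * dist y z := by rw [dist_lineMap_lineMap, hs]
    _ ≤ dist (t, y) (s, z) * D + R * dist (t, y) (s, z) := by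
        gcongr
        · exact le_max_left _ _
        · exact hq.1.1.trans hq.1.2
        · exact hq.1.2
        · exact le_max_right _ _
    _ = (R + D) * dist (t, y) (s, z) := by ring

variable [MeasurableSpace E] [BorelSpace E]

theorem hausdorffMeasure_coneOver_le {d : ℝ} (hd : 0 ≤ d) (x : E) {R D : ℝ} (hR : 0 < R)
    {A : Set E} (hA : A ⊆ closedBall x D) :
    μH[d + 1] (coneOver x R A) ≤ .ofReal (R + D) ^ (d + 1) * (.ofReal R * μH[d] A) :=
  calc μH[d + 1] (coneOver x R A)
      ≤ .ofReal (R + D) ^ (d + 1) * μH[d + 1] (Icc 0 R ×ˢ A) :=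
        ((lipschitzOnWith_lineMap_Icc_prod_closedBall x R D).mono
          (prod_mono_right hA)).hausdorffMeasure_image_le (by positivity)
    _ ≤ .ofReal (R + D) ^ (d + 1) * (.ofReal R * μH[d] A) := by
        gcongr
        simpa only [sub_zero] using hausdorffMeasure_Icc_prod_le hd hR A

end Cone

theorem volume_of_points_shadowed_by_small_surface_general {E : Type*} [NormedAddCommGroup E]
    [NormedSpace ℝ E] [FiniteDimensional ℝ E] [MeasurableSpace E] [BorelSpace E] (μ : Measure E)
    [μ.IsAddHaarMeasure] {n : ℕ} (hn : Module.finrank ℝ E = n + 1) (D δ : ℝ) (hD : 0 < D)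
    (hδ : 0 < δ) :
    ∃ C : ℝ, 0 < C ∧ ∀ (S : Set E) (x : E), δ ≤ infDist x S →
      μ {z : E | z ∈ closedBall x D ∧ (segment ℝ x z ∩ S).Nonempty} ≤
        ENNReal.ofReal C * μH[n] (S ∩ closedBall x D) := by
  have hHaar : (μH[(n : ℝ) + 1] : Measure E).IsAddHaarMeasure := by
    have := isAddHaarMeasure_hausdorffMeasure (E := E)
    rwa [hn, Nat.cast_add_one] at this
  set c := Measure.addHaarScalarFactor μ (μH[(n : ℝ) + 1] : Measure E)
  have hμ : μ = c • μH[(n : ℝ) + 1] := Measure.isAddLeftInvariant_eq_smul _ _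
  have hc : 0 < c := Measure.addHaarScalarFactor_pos_of_isAddHaarMeasure _ _
  set R := D / δ
  have hR : 0 < R := div_pos hD hδ
  refine ⟨c * ((R + D) ^ ((n : ℝ) + 1) * R), by positivity, fun S x hx => ?_⟩
  set A := S ∩ closedBall x D
  calc μ {z : E | z ∈ closedBall x D ∧ (segment ℝ x z ∩ S).Nonempty}
      ≤ μ (coneOver x R A) := measure_mono (setOf_segment_inter_nonempty_subset_coneOver hδ hx)
    _ = c * μH[(n : ℝ) + 1] (coneOver x R A) := by
        rw [hμ, Measure.smul_apply, ENNReal.smul_def, smul_eq_mul]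
    _ ≤ c * (.ofReal (R + D) ^ ((n : ℝ) + 1) * (.ofReal R * μH[n] A)) := by
        gcongr
        exact hausdorffMeasure_coneOver_le n.cast_nonneg x hR inter_subset_right
    _ = .ofReal (c * ((R + D) ^ ((n : ℝ) + 1) * R)) * μH[n] A := by
        rw [ENNReal.ofReal_mul c.coe_nonneg, ENNReal.ofReal_mul (by positivity),
          ENNReal.ofReal_coe_nnreal, ENNReal.ofReal_rpow_of_pos (by positivity)]
        ring

theorem volume_of_points_shadowed_by_small_surface
    (D δ : ℝ) (hD : 0 < D) (hδ : 0 < δ) :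
    ∃ C : ℝ, 0 < C ∧
      ∀ (S : Set (EuclideanSpace ℝ (Fin 3))) (x : EuclideanSpace ℝ (Fin 3)),
        δ ≤ Metric.infDist x S →
        volume {z : EuclideanSpace ℝ (Fin 3) |
            z ∈ Metric.closedBall x D ∧ (segment ℝ x z ∩ S).Nonempty} ≤
          ENNReal.ofReal C * μH[2] (S ∩ Metric.closedBall x D) := by
  exact_mod_cast volume_of_points_shadowed_by_small_surface_general
    (volume : Measure (EuclideanSpace ℝ (Fin 3))) (n := 2) finrank_euclideanSpace_fin D δ hD hδ
end

section
/- Let X be a metric space and let 0 < L₀ and 4·L₀ ≤ L. Assume: (a) X is geodesic: for all x, y ∈ X there is γ : ℝ → X with γ(0) = x, γ(dist(x,y)) = y and dist(γ(s), γ(t)) = |s − t| for all s, t ∈ [0, dist(x,y)]; (b) X is non-branching: whenever l > 0 and γ₁, γ₂ : ℝ → X satisfy dist(γ_i(s), γ_i(t)) = |s − t| for all s, t ∈ [0, l] (i = 1, 2), γ₁(0) = γ₂(0), and there is ε > 0 with γ₁(t) = γ₂(t) for all t ∈ [0, ε], then γ₁(t) = γ₂(t) for all t ∈ [0, l]. Let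 f : X → ℝ³ satisfy ‖f(x)‖ ≤ L for all x, and let Q ⊆ X be such that every w ∈ ℝ³ with L₀ ≤ ‖w‖ ≤ L equals f(p) for some p ∈ Q, and dist(x, p) = ‖f(x) − f(p)‖ for every x ∈ X, p ∈ Q. Assume moreover that f is injective on the preimage of the open annulus: if L₀ < ‖f(x₁)‖ < 2·L₀ and f(x₁) = f(x₂) then x₁ = x₂. Then f is injective on {x : ‖f(x)‖ ≤ L/2}: if ‖f(y₁)‖ ≤ L/2, ‖f(y₂)‖ ≤ L/2 and f(y₁) = f(y₂), then y₁ = y₂. -/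
/-!
Let `q` be an interior point of the set `Q` to which `f` preserves distances. If `f y₁ = f y₂`,
join `q` to `y₁` and to `y₂` by geodesics. As long as these stay in `Q`, the map `f` sends them to
points of the chord from `f q` to `f y₁ = f y₂`, at the same distance from `f q`; by strict
convexity the image points agree, and `f` separates the points of `Q`. So the two geodesics have a
common initial piece, and non-branching makes their endpoints equal.

Such a `q` exists because the image `f(Q)`, which contains an annulus, has an interior point: `f`
is continuous at the points of `Q`, and a point mapped into `f(Q)` already lies in `Q`.
-/

open Set Topology

section Geodesics

variable {X : Type*} [PseudoMetricSpace X]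

/-- `γ` restricted to `[0, l]` is a minimizing geodesic parametrized by arc length. Its values
outside `[0, l]` are irrelevant, which lets geodesics of all lengths share the type `ℝ → X`. -/
def IsUnitSpeedGeodesic (γ : ℝ → X) (l : ℝ) : Prop :=
  ∀ s ∈ Icc 0 l, ∀ t ∈ Icc 0 l, dist (γ s) (γ t) = |s - t|

variable (X) in
/-- A geodesic space: any two points are joined by a minimizing geodesic. -/
def IsGeodesicSpace : Prop :=
  ∀ x y : X, ∃ γ : ℝ → X, γ 0 = x ∧ γ (dist x y) = y ∧ IsUnitSpeedGeodesic γ (dist x y)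

variable (X) in
/-- A non-branching space: two minimizing geodesics of the same length which agree near their
initial point agree throughout. -/
def IsNonBranching : Prop :=
  ∀ l : ℝ, 0 < l → ∀ γ₁ γ₂ : ℝ → X, IsUnitSpeedGeodesic γ₁ l → IsUnitSpeedGeodesic γ₂ l →
    γ₁ 0 = γ₂ 0 → (∃ ε > 0, ∀ t ∈ Icc (0 : ℝ) ε, γ₁ t = γ₂ t) → ∀ t ∈ Icc (0 : ℝ) l, γ₁ t = γ₂ t

namespace IsUnitSpeedGeodesic

variable {γ : ℝ → X} {l t : ℝ}

lemma dist_left (hγ : IsUnitSpeedGeodesic γ l) (ht : t ∈ Icc 0 l) : dist (γ 0) (γ t) = t := by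
  rw [hγ 0 ⟨le_rfl, ht.1.trans ht.2⟩ t ht, zero_sub, abs_neg, abs_of_nonneg ht.1]

lemma dist_right (hγ : IsUnitSpeedGeodesic γ l) (ht : t ∈ Icc 0 l) :
    dist (γ t) (γ l) = l - t := by
  rw [hγ t ht l ⟨ht.1.trans ht.2, le_rfl⟩, abs_sub_comm, abs_of_nonneg (sub_nonneg.2 ht.2)]

lemma dist_add_dist (hγ : IsUnitSpeedGeodesic γ l) (ht : t ∈ Icc 0 l) :
    dist (γ 0) (γ t) + dist (γ t) (γ l) = dist (γ 0) (γ l) := by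
  rw [hγ.dist_left ht, hγ.dist_right ht, hγ.dist_left ⟨ht.1.trans ht.2, le_rfl⟩,
    add_sub_cancel]

end IsUnitSpeedGeodesic

end Geodesics

lemma eq_of_wbtw_of_dist_left_eq {V P : Type*} [NormedAddCommGroup V] [NormedSpace ℝ V]
    [MetricSpace P] [NormedAddTorsor V P] {a b x y : P} (hx : Wbtw ℝ a x b) (hy : Wbtw ℝ a y b)
    (hxy : dist a x = dist a y) : x = y := by
  rcases eq_or_ne a b with rfl | hab
  · rw [(wbtw_self_iff ℝ).1 hx, (wbtw_self_iff ℝ).1 hy]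
  · obtain ⟨r, ⟨hr, -⟩, rfl⟩ := hx
    obtain ⟨s, ⟨hs, -⟩, rfl⟩ := hy
    simp only [dist_left_lineMap, Real.norm_of_nonneg hr, Real.norm_of_nonneg hs] at hxy
    rw [mul_right_cancel₀ (dist_ne_zero.2 hab) hxy]

lemma nonempty_interior_of_annulus_subset {E : Type*} [NormedAddCommGroup E] [NormedSpace ℝ E]
    [Nontrivial E] {a b : ℝ} (hab : a < b) (hb : 0 < b) {S : Set E}
    (hS : ∀ w, a ≤ ‖w‖ → ‖w‖ ≤ b → w ∈ S) : (interior S).Nonempty := by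
  obtain ⟨r, har, hrb⟩ := exists_between (max_lt hab hb)
  obtain ⟨har, hr⟩ := max_lt_iff.1 har
  obtain ⟨w, hw⟩ := exists_norm_eq E hr.le
  refine ⟨w, mem_interior_iff_mem_nhds.2 ?_⟩
  have hw_nhds : norm ⁻¹' Icc a b ∈ 𝓝 w :=
    continuous_norm.continuousAt (hw.symm ▸ Icc_mem_nhds har hrb)
  exact Filter.mem_of_superset hw_nhds fun v hv => hS v hv.1 hv.2

/-- The map `f` preserves the distance from any point of `X` to any point of `Q`; unlike for an
isometry, nothing is asked of pairs of points outside `Q`. -/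
def PreservesDistTo {X Y : Type*} [PseudoMetricSpace X] [PseudoMetricSpace Y] (f : X → Y)
    (Q : Set X) : Prop :=
  ∀ x, ∀ p ∈ Q, dist x p = dist (f x) (f p)

namespace PreservesDistTo

lemma continuousAt {X Y : Type*} [PseudoMetricSpace X] [PseudoMetricSpace Y] {f : X → Y}
    {Q : Set X} (hf : PreservesDistTo f Q) {q : X} (hq : q ∈ Q) : ContinuousAt f q :=
  Metric.continuousAt_iff.2 fun ε hε => ⟨ε, hε, fun x hx => hf x q hq ▸ hx⟩

section Separation

variable {X Y : Type*} [MetricSpace X] [PseudoMetricSpace Y] {f : X → Y} {Q : Set X}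

lemma eq_of_map_eq (hf : PreservesDistTo f Q) {x p : X} (hp : p ∈ Q) (h : f x = f p) : x = p := by
  rw [← dist_eq_zero, hf x p hp, h, dist_self]

lemma preimage_image_eq (hf : PreservesDistTo f Q) : f ⁻¹' (f '' Q) = Q := by
  refine (subset_preimage_image f Q).antisymm' ?_
  rintro x ⟨p, hp, hpx⟩
  rwa [hf.eq_of_map_eq hp hpx.symm]

lemma nonempty_interior (hf : PreservesDistTo f Q) (hQ : (interior (f '' Q)).Nonempty) :
    (interior Q).Nonempty := by
  obtain ⟨w, hw⟩ := hQ
  obtain ⟨q, hq, rfl⟩ := interior_subset hw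
  refine ⟨q, mem_interior_iff_mem_nhds.2 ?_⟩
  rw [← hf.preimage_image_eq]
  exact hf.continuousAt hq (mem_interior_iff_mem_nhds.1 hw)

end Separation

lemma wbtw_map {X V P : Type*} [PseudoMetricSpace X] [NormedAddCommGroup V] [NormedSpace ℝ V]
    [StrictConvexSpace ℝ V] [MetricSpace P] [NormedAddTorsor V P] {f : X → P} {Q : Set X}
    (hf : PreservesDistTo f Q) {p q y : X} (hq : q ∈ Q) (hp : p ∈ Q)
    (h : dist q p + dist p y = dist q y) : Wbtw ℝ (f q) (f p) (f y) := by
  rw [← dist_add_dist_eq_iff, ← hf q p hp, dist_comm (f p), ← hf y p hp, dist_comm (f q),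
    ← hf y q hq, dist_comm y p, dist_comm y q, h]

lemma eq_of_isUnitSpeedGeodesic {X V P : Type*} [MetricSpace X] [NormedAddCommGroup V]
    [NormedSpace ℝ V] [StrictConvexSpace ℝ V] [MetricSpace P] [NormedAddTorsor V P] {f : X → P}
    {Q : Set X} {γ₁ γ₂ : ℝ → X} {l : ℝ} (hf : PreservesDistTo f Q)
    (hγ₁ : IsUnitSpeedGeodesic γ₁ l) (hγ₂ : IsUnitSpeedGeodesic γ₂ l) (h₀ : γ₁ 0 = γ₂ 0)
    (hl : f (γ₁ l) = f (γ₂ l)) (h₀Q : γ₁ 0 ∈ Q) {t : ℝ} (ht : t ∈ Icc 0 l) (h₁Q : γ₁ t ∈ Q)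
    (h₂Q : γ₂ t ∈ Q) : γ₁ t = γ₂ t := by
  have hw₁ : Wbtw ℝ (f (γ₁ 0)) (f (γ₁ t)) (f (γ₁ l)) :=
    hf.wbtw_map h₀Q h₁Q (hγ₁.dist_add_dist ht)
  have hw₂ : Wbtw ℝ (f (γ₁ 0)) (f (γ₂ t)) (f (γ₁ l)) := by
    rw [hl, h₀]
    exact hf.wbtw_map (h₀ ▸ h₀Q) h₂Q (hγ₂.dist_add_dist ht)
  have hdist : dist (f (γ₁ 0)) (f (γ₁ t)) = dist (f (γ₁ 0)) (f (γ₂ t)) := by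
    rw [← hf _ _ h₁Q, ← hf _ _ h₂Q, hγ₁.dist_left ht, h₀, hγ₂.dist_left ht]
  exact hf.eq_of_map_eq h₂Q (eq_of_wbtw_of_dist_left_eq hw₁ hw₂ hdist)

lemma exists_pos_forall_mem_Icc_eq {X V P : Type*} [MetricSpace X] [NormedAddCommGroup V]
    [NormedSpace ℝ V] [StrictConvexSpace ℝ V] [MetricSpace P] [NormedAddTorsor V P] {f : X → P}
    {Q : Set X} {γ₁ γ₂ : ℝ → X} {l : ℝ} (hf : PreservesDistTo f Q) (hlpos : 0 < l)
    (hγ₁ : IsUnitSpeedGeodesic γ₁ l) (hγ₂ : IsUnitSpeedGeodesic γ₂ l) (h₀ : γ₁ 0 = γ₂ 0)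
    (hl : f (γ₁ l) = f (γ₂ l)) (hQ : Q ∈ 𝓝 (γ₁ 0)) :
    ∃ ε > 0, ∀ t ∈ Icc 0 ε, γ₁ t = γ₂ t := by
  obtain ⟨r, hr, hball⟩ := Metric.mem_nhds_iff.1 hQ
  refine ⟨min l (r / 2), lt_min hlpos (half_pos hr), fun t ⟨ht₀, ht⟩ => ?_⟩
  have htl : t ∈ Icc 0 l := ⟨ht₀, ht.trans (min_le_left _ _)⟩
  have htr : t < r := (ht.trans (min_le_right _ _)).trans_lt (half_lt_self hr)
  have mem_Q {γ : ℝ → X} (hγ : IsUnitSpeedGeodesic γ l) (hγ₀ : γ 0 = γ₁ 0) : γ t ∈ Q :=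
    hball (Metric.mem_ball'.2 (by rwa [← hγ₀, hγ.dist_left htl]))
  exact hf.eq_of_isUnitSpeedGeodesic hγ₁ hγ₂ h₀ hl (mem_of_mem_nhds hQ) htl (mem_Q hγ₁ rfl)
    (mem_Q hγ₂ h₀.symm)

end PreservesDistTo

theorem injectivity_from_annulus_and_nonbranching_general {X V P : Type*} [MetricSpace X]
    [NormedAddCommGroup V] [NormedSpace ℝ V] [StrictConvexSpace ℝ V] [MetricSpace P]
    [NormedAddTorsor V P] (hgeo : IsGeodesicSpace X) (hnb : IsNonBranching X) {f : X → P}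
    {Q : Set X} (hf : PreservesDistTo f Q) (hQ : (interior (f '' Q)).Nonempty) :
    Function.Injective f := by
  intro y₁ y₂ hy
  obtain ⟨q, hq⟩ := hf.nonempty_interior hQ
  have hqQ : q ∈ Q := interior_subset hq
  have hd : dist q y₁ = dist q y₂ := by
    rw [dist_comm, hf y₁ q hqQ, hy, ← hf y₂ q hqQ, dist_comm]
  rcases eq_or_ne q y₂ with rfl | hne
  · exact hf.eq_of_map_eq hqQ hy
  obtain ⟨γ₁, h₁₀, h₁l, hγ₁⟩ := hgeo q y₁
  obtain ⟨γ₂, h₂₀, h₂l, hγ₂⟩ := hgeo q y₂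
  rw [hd] at h₁l hγ₁
  have hpos : 0 < dist q y₂ := dist_pos.2 hne
  have h₀ : γ₁ 0 = γ₂ 0 := h₁₀.trans h₂₀.symm
  have hinit : ∃ ε > 0, ∀ t ∈ Icc 0 ε, γ₁ t = γ₂ t :=
    hf.exists_pos_forall_mem_Icc_eq hpos hγ₁ hγ₂ h₀ (by rw [h₁l, h₂l, hy])
      (h₁₀ ▸ mem_interior_iff_mem_nhds.1 hq)
  calc
    y₁ = γ₁ (dist q y₂) := h₁l.symm
    _ = γ₂ (dist q y₂) := hnb _ hpos γ₁ γ₂ hγ₁ hγ₂ h₀ hinit _ ⟨hpos.le, le_rfl⟩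
    _ = y₂ := h₂l

theorem injectivity_from_annulus_and_nonbranching
    {X : Type*} [MetricSpace X] (L₀ L : ℝ) (hL₀ : 0 < L₀) (hL : 4 * L₀ ≤ L)
    (hgeo : ∀ x y : X, ∃ γ : ℝ → X, γ 0 = x ∧ γ (dist x y) = y ∧
      ∀ s ∈ Set.Icc 0 (dist x y), ∀ t ∈ Set.Icc 0 (dist x y),
        dist (γ s) (γ t) = |s - t|)
    (hnb : ∀ l : ℝ, 0 < l → ∀ γ₁ γ₂ : ℝ → X,
      (∀ s ∈ Set.Icc (0 : ℝ) l, ∀ t ∈ Set.Icc (0 : ℝ) l, dist (γ₁ s) (γ₁ t) = |s - t|) →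
      (∀ s ∈ Set.Icc (0 : ℝ) l, ∀ t ∈ Set.Icc (0 : ℝ) l, dist (γ₂ s) (γ₂ t) = |s - t|) →
      γ₁ 0 = γ₂ 0 →
      (∃ ε > 0, ∀ t ∈ Set.Icc (0 : ℝ) ε, γ₁ t = γ₂ t) →
      ∀ t ∈ Set.Icc (0 : ℝ) l, γ₁ t = γ₂ t)
    (f : X → EuclideanSpace ℝ (Fin 3)) (hfbd : ∀ x, ‖f x‖ ≤ L)
    (Q : Set X)
    (hsurj : ∀ w : EuclideanSpace ℝ (Fin 3), L₀ ≤ ‖w‖ → ‖w‖ ≤ L → ∃ p ∈ Q, f p = w)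
    (hdist : ∀ x : X, ∀ p ∈ Q, dist x p = ‖f x - f p‖)
    (hinj : ∀ x₁ x₂ : X, L₀ < ‖f x₁‖ → ‖f x₁‖ < 2 * L₀ → f x₁ = f x₂ → x₁ = x₂) :
    ∀ y₁ y₂ : X, ‖f y₁‖ ≤ L / 2 → ‖f y₂‖ ≤ L / 2 → f y₁ = f y₂ → y₁ = y₂ := by
  have hf : PreservesDistTo f Q := fun x p hp => (hdist x p hp).trans (dist_eq_norm _ _).symm
  exact fun y₁ y₂ _ _ hy => injectivity_from_annulus_and_nonbranching_general hgeo hnb hf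
    (nonempty_interior_of_annulus_subset (by linarith) (by linarith) hsurj) hy
end
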